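/- Let n ≥ 3 and let 𝔹 be the open unit ball in ℝⁿ. For x ∈ 𝔹 with r = |x|, let 𝒦_n(x) be the smallest constant such that |∇u(x)| ≤ 𝒦_n(x)·‖g‖_{L^∞(S^{n−1})} for every u that is the Poisson integral over S^{n−1} of a boundary function g ∈ L^∞(S^{n−1}). Then 𝒦_n(x) = [2^{n−2}(n−2) / (π (1+r)^{n−1} (1−r))] · sup_{γ≥0} (1/√(1+γ²)) ∫₀^π sin^{n−3}φ dφ ∫₀^{π/2} G_n(θ, φ; r, γ) dθ, where G_n(θ, φ; r, γ) = |n cos 2θ + n γ sin 2θ cos φ + (n−2) r| · sin^{n−2}θ / [1 + ((1−r)/(1+r))² tan²θ]^{(n−2)/2}. -/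

import Mathlib

open MeasureTheory Real Filter Metric
open scoped Real RealInnerProductSpace

noncomputable section

/-- `Eu n` is the Euclidean space `ℝⁿ`. -/
abbrev Eu (n : ℕ) := EuclideanSpace ℝ (Fin n)

/-- `ω_n`: the surface area of the unit sphere `S^{n-1}` in `ℝⁿ`,
given by the classical formula `2 π^{n/2} / Γ(n/2)`. -/
def sphereArea (n : ℕ) : ℝ := 2 * π ^ ((n : ℝ) / 2) / Real.Gamma ((n : ℝ) / 2)

/-- The function `G_n(θ, φ; r, γ)` from the statement. -/
def Gfun (n : ℕ) (θ φ r γ : ℝ) : ℝ :=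
  |(n : ℝ) * Real.cos (2 * θ) + (n : ℝ) * γ * Real.sin (2 * θ) * Real.cos φ +
      ((n : ℝ) - 2) * r| * Real.sin θ ^ (n - 2) /
    (1 + ((1 - r) / (1 + r)) ^ 2 * Real.tan θ ^ 2) ^ (((n : ℝ) - 2) / 2)

/-- The claimed value of the sharp coefficient `𝒦_n(x)` (with `r = |x|`). -/
def Kcoef (n : ℕ) (r : ℝ) : ℝ :=
  (2 ^ (n - 2) * ((n : ℝ) - 2) / (π * (1 + r) ^ (n - 1) * (1 - r))) *
    ⨆ γ ∈ Set.Ici (0 : ℝ), (1 / Real.sqrt (1 + γ ^ 2)) *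
      ∫ φ in (0:ℝ)..π, Real.sin φ ^ (n - 3) * ∫ θ in (0:ℝ)..(π / 2), Gfun n θ φ r γ

/-- The Poisson integral `u(x) = (1/ωₙ) ∫_{S^{n-1}} ((1-|x|²)/|y-x|ⁿ) g(y) dσ_y`
of a boundary function `g ∈ L^∞(S^{n-1})`. -/
def poissonBall {n : ℕ} (g : Metric.sphere (0 : Eu n) 1 → ℝ) (x : Eu n) : ℝ :=
  (1 / sphereArea n) * ∫ y : Metric.sphere (0 : Eu n) 1,
    ((1 - ‖x‖ ^ 2) / ‖(y : Eu n) - x‖ ^ n) * g y ∂(volume.toSphere)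

/-!
By duality, testing with `g = sign ⟪∇P(x, ·), l⟫`, the best constant at `x` is the supremum over
unit vectors `l` of `(1 / ωₙ) ∫ |⟪∇P(x, y), l⟫| dσ(y)`. Write `x = r • e` with `e` a unit vector.
This quantity is even and continuous in `l`, so it is enough to consider the directions of
`e + γ • v` with `γ ≥ 0` and `v` a unit vector orthogonal to `e`; these have length `√(1 + γ ^ 2)`.

For such directions the integrand depends on `⟪e, y⟫ = cos t` and `⟪v, y⟫ = sin t cos φ` only, and
slicing the sphere twice leaves an integral over `t` and `φ`. The substitution
`tan (t / 2) = (1 - r) / (1 + r) * tan θ`, under which the chord from `y` through `x` meets the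
sphere again at polar angle `π + 2 θ`, turns the numerator of the kernel into
`n cos 2θ + n γ sin 2θ cos φ + (n - 2) r`.
-/

open Set Module
open scoped ENNReal

section Sphere

section NormedSpace

variable {E : Type*} [NormedAddCommGroup E] [NormedSpace ℝ E] [FiniteDimensional ℝ E]
  [Nontrivial E] [MeasurableSpace E] [BorelSpace E] (μ : Measure E) [μ.IsAddHaarMeasure]

theorem lintegral_eq_lintegral_toSphere_Ioi {f : E → ℝ≥0∞} (hf : Measurable f) :
    ∫⁻ x, f x ∂μ = ∫⁻ y : sphere (0 : E) 1, (∫⁻ ρ in Ioi (0 : ℝ),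
      ENNReal.ofReal (ρ ^ (finrank ℝ E - 1)) * f (ρ • (y : E))) ∂μ.toSphere := by
  have hpolar := MeasurePreserving.symm (homeomorphUnitSphereProd E).toMeasurableEquiv
    μ.measurePreserving_homeomorphUnitSphereProd
  calc ∫⁻ x, f x ∂μ
      = ∫⁻ x : ({0}ᶜ : Set E), f x ∂μ.comap Subtype.val := by
        rw [lintegral_subtype_comap (measurableSet_singleton 0).compl f, restrict_compl_singleton]
    _ = ∫⁻ p, f ((p.2 : ℝ) • (p.1 : E))
          ∂μ.toSphere.prod (.volumeIoiPow (finrank ℝ E - 1)) :=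
        (hpolar.lintegral_comp (hf.comp measurable_subtype_coe)).symm
    _ = ∫⁻ y : sphere (0 : E) 1, (∫⁻ ρ : Ioi (0 : ℝ), f ((ρ : ℝ) • (y : E))
          ∂.volumeIoiPow (finrank ℝ E - 1)) ∂μ.toSphere :=
        lintegral_prod _ (hf.comp (by fun_prop)).aemeasurable
    _ = _ := by
        refine lintegral_congr fun y => ?_
        rw [← lintegral_subtype_comap measurableSet_Ioi]
        exact lintegral_withDensity_eq_lintegral_mul _ (by fun_prop) (hf.comp (by fun_prop))

/-- The radial weight `ρ ^ (1 - d)` on `(0, 1)`, for which the radial part `∫ ρ ^ (d - 1) w(ρ) dρ`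
of an integral in polar coordinates of `ℝᵈ` equals `1`. It serves to write integrals over the unit
sphere as integrals over the whole space. -/
def unitRadialWeight (d : ℕ) : ℝ → ℝ≥0∞ :=
  (Ioo 0 1).indicator fun ρ => (ENNReal.ofReal (ρ ^ (d - 1)))⁻¹

theorem measurable_unitRadialWeight (d : ℕ) : Measurable (unitRadialWeight d) := by
  unfold unitRadialWeight
  exact Measurable.indicator (by fun_prop) measurableSet_Ioo

theorem lintegral_pow_mul_unitRadialWeight (d : ℕ) :
    ∫⁻ ρ in Ioi (0 : ℝ), ENNReal.ofReal (ρ ^ (d - 1)) * unitRadialWeight d ρ = 1 := by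
  have hind : ∀ ρ ∈ Ioi (0 : ℝ), ENNReal.ofReal (ρ ^ (d - 1)) * unitRadialWeight d ρ =
      (Ioo 0 1).indicator 1 ρ := by
    intro ρ (hρ : 0 < ρ)
    by_cases h : ρ < 1
    · simp [unitRadialWeight, hρ, h, ENNReal.mul_inv_cancel, ENNReal.ofReal_ne_top, pow_pos]
    · simp [unitRadialWeight, h]
  rw [setLIntegral_congr_fun measurableSet_Ioi hind, setLIntegral_indicator measurableSet_Ioo,
    Ioo_inter_Ioi]
  simp

theorem lintegral_toSphere_eq_lintegral {f : E → ℝ≥0∞} (hf : Measurable f) :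
    ∫⁻ y : sphere (0 : E) 1, f y ∂μ.toSphere =
      ∫⁻ x, unitRadialWeight (finrank ℝ E) ‖x‖ * f (‖x‖⁻¹ • x) ∂μ := by
  have hw := measurable_unitRadialWeight (finrank ℝ E)
  rw [lintegral_eq_lintegral_toSphere_Ioi μ (by fun_prop)]
  refine lintegral_congr fun y => ?_
  calc f y = ∫⁻ ρ in Ioi (0 : ℝ), (ENNReal.ofReal (ρ ^ (finrank ℝ E - 1)) *
          unitRadialWeight (finrank ℝ E) ρ) * f y := by
        rw [lintegral_mul_const _ (by fun_prop), lintegral_pow_mul_unitRadialWeight, one_mul]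
    _ = _ := setLIntegral_congr_fun measurableSet_Ioi fun ρ (hρ : 0 < ρ) => by
        simp [norm_smul, abs_of_pos hρ, smul_smul, hρ.ne', mul_assoc]

end NormedSpace

theorem lintegral_halfPlane_eq_lintegral_polar {f : ℝ × ℝ → ℝ≥0∞} (hf : Measurable f) :
    ∫⁻ a : ℝ, ∫⁻ b in Ioi (0 : ℝ), f (a, b) =
      ∫⁻ ρ in Ioi (0 : ℝ), ∫⁻ t in Ioo 0 π,
        ENNReal.ofReal ρ * f (ρ * cos t, ρ * sin t) := by
  have hS : MeasurableSet (univ ×ˢ Ioi (0 : ℝ) : Set (ℝ × ℝ)) :=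
    MeasurableSet.univ.prod measurableSet_Ioi
  have hind : ∀ ρ ∈ Ioi (0 : ℝ), ∀ t ∈ Ioo (-π) π,
      ENNReal.ofReal ρ * (univ ×ˢ Ioi (0 : ℝ)).indicator f (ρ * cos t, ρ * sin t) =
        (Ioo 0 π).indicator (fun t => ENNReal.ofReal ρ * f (ρ * cos t, ρ * sin t)) t := by
    intro ρ (hρ : 0 < ρ) t ht
    rcases lt_or_ge 0 t with h | h
    · have hsin := sin_pos_of_pos_of_lt_pi h ht.2
      simp [h, ht.2, hρ, hsin]
    · have hsin := sin_nonpos_of_nonpos_of_neg_pi_le h ht.1.le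
      have : ¬ 0 < ρ * sin t := not_lt.2 (mul_nonpos_of_nonneg_of_nonpos hρ.le hsin)
      simp [h.not_gt, this]
  have hpolar : Measurable fun p : ℝ × ℝ => ENNReal.ofReal p.1 •
      (univ ×ˢ Ioi (0 : ℝ)).indicator f (polarCoord.symm p) :=
    (by fun_prop : Measurable fun p : ℝ × ℝ => ENNReal.ofReal p.1).smul
      ((hf.indicator hS).comp continuous_polarCoord_symm.measurable)
  calc ∫⁻ a : ℝ, ∫⁻ b in Ioi (0 : ℝ), f (a, b)
      = ∫⁻ p, (univ ×ˢ Ioi (0 : ℝ)).indicator f p := by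
        rw [lintegral_indicator hS, Measure.volume_eq_prod, ← Measure.prod_restrict,
          Measure.restrict_univ, lintegral_prod _ hf.aemeasurable]
    _ = ∫⁻ ρ in Ioi (0 : ℝ), ∫⁻ t in Ioo (-π) π, ENNReal.ofReal ρ *
          (univ ×ˢ Ioi (0 : ℝ)).indicator f (ρ * cos t, ρ * sin t) := by
        rw [← lintegral_comp_polarCoord_symm, polarCoord_target, Measure.volume_eq_prod,
          ← Measure.prod_restrict, lintegral_prod _ hpolar.aemeasurable]
        simp only [polarCoord_symm_apply, smul_eq_mul]
    _ = _ := by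
        refine setLIntegral_congr_fun measurableSet_Ioi fun ρ hρ => ?_
        have hsub : Ioo 0 π ∩ Ioo (-π) π = Ioo 0 π :=
          inter_eq_left.2 (Ioo_subset_Ioo_left (by linarith [pi_pos]))
        rw [setLIntegral_congr_fun measurableSet_Ioo (hind ρ hρ),
          setLIntegral_indicator measurableSet_Ioo, hsub]

section InnerProductSpace

variable {E : Type*} [NormedAddCommGroup E] [InnerProductSpace ℝ E]

theorem finrank_orthogonal_singleton [FiniteDimensional ℝ E] {e : E} (he : e ≠ 0) :
    finrank ℝ (ℝ ∙ e)ᗮ = finrank ℝ E - 1 := by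
  have := (ℝ ∙ e).finrank_add_finrank_orthogonal
  rw [finrank_span_singleton he] at this
  omega

theorem norm_cos_smul_add_sin_smul {e z : E} (he : ‖e‖ = 1) (hz : ‖z‖ = 1) (hez : ⟪e, z⟫ = 0)
    (t : ℝ) : ‖cos t • e + sin t • z‖ = 1 := by
  rw [← pow_eq_one_iff_of_nonneg (norm_nonneg _) two_ne_zero, norm_add_sq_real, norm_smul,
    norm_smul, real_inner_smul_left, real_inner_smul_right, hez, he, hz]
  simp

variable [FiniteDimensional ℝ E] [MeasurableSpace E] [BorelSpace E]

theorem lintegral_eq_lintegral_smul_add_orthogonal {e : E} (he : ‖e‖ = 1) {f : E → ℝ≥0∞}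
    (hf : Measurable f) :
    ∫⁻ x, f x = ∫⁻ a : ℝ, ∫⁻ z : (ℝ ∙ e)ᗮ, f (a • e + z) := by
  have hspan : MeasurePreserving (LinearIsometryEquiv.toSpanUnitSingleton (𝕜 := ℝ) e he) :=
    LinearIsometryEquiv.measurePreserving _
  have hdecomp := ((ℝ ∙ e).orthogonalDecomposition.symm.measurePreserving.comp
    (WithLp.volume_preserving_toLp (ℝ ∙ e) (ℝ ∙ e)ᗮ)).comp
      (hspan.prod (MeasurePreserving.id (volume : Measure (ℝ ∙ e)ᗮ)))
  rw [← hdecomp.lintegral_comp hf]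
  exact (lintegral_prod _ (hf.comp hdecomp.measurable).aemeasurable).trans (by simp)

theorem lintegral_eq_lintegral_spherical (hd : 2 ≤ finrank ℝ E) {e : E} (he : ‖e‖ = 1)
    {f : E → ℝ≥0∞} (hf : Measurable f) :
    ∫⁻ x, f x = ∫⁻ z : sphere (0 : (ℝ ∙ e)ᗮ) 1, (∫⁻ ρ in Ioi (0 : ℝ), ∫⁻ t in Ioo 0 π,
      ENNReal.ofReal (ρ ^ (finrank ℝ E - 1)) * (ENNReal.ofReal (sin t ^ (finrank ℝ E - 2)) *
        f (ρ • (cos t • e + sin t • (z : E))))) ∂volume.toSphere := by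
  have hfin := finrank_orthogonal_singleton (norm_ne_zero_iff.1 (he ▸ one_ne_zero))
  have : Nontrivial (ℝ ∙ e)ᗮ := nontrivial_of_finrank_pos (R := ℝ) (by omega)
  calc ∫⁻ x, f x
      = ∫⁻ a : ℝ, ∫⁻ z : (ℝ ∙ e)ᗮ, f (a • e + z) := lintegral_eq_lintegral_smul_add_orthogonal he hf
    _ = ∫⁻ a : ℝ, ∫⁻ z : sphere (0 : (ℝ ∙ e)ᗮ) 1, (∫⁻ b in Ioi (0 : ℝ),
          ENNReal.ofReal (b ^ (finrank ℝ E - 2)) * f (a • e + b • (z : E))) ∂volume.toSphere := by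
        refine lintegral_congr fun a => ?_
        rw [lintegral_eq_lintegral_toSphere_Ioi volume (by fun_prop), hfin, Nat.sub_sub]
        rfl
    _ = ∫⁻ z : sphere (0 : (ℝ ∙ e)ᗮ) 1, (∫⁻ a : ℝ, ∫⁻ b in Ioi (0 : ℝ),
          ENNReal.ofReal (b ^ (finrank ℝ E - 2)) * f (a • e + b • (z : E))) ∂volume.toSphere :=
        lintegral_lintegral_swap (Measurable.lintegral_prod_right'
          (f := fun q : (ℝ × sphere (0 : (ℝ ∙ e)ᗮ) 1) × ℝ =>
            ENNReal.ofReal (q.2 ^ (finrank ℝ E - 2)) * f (q.1.1 • e + q.2 • (q.1.2 : E)))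
          (by fun_prop)).aemeasurable
    _ = _ := by
        refine lintegral_congr fun z => ?_
        rw [lintegral_halfPlane_eq_lintegral_polar (f := fun q : ℝ × ℝ =>
          ENNReal.ofReal (q.2 ^ (finrank ℝ E - 2)) * f (q.1 • e + q.2 • (z : E))) (by fun_prop)]
        refine setLIntegral_congr_fun measurableSet_Ioi fun ρ (hρ : 0 < ρ) =>
          lintegral_congr fun t => ?_
        have hjac : ENNReal.ofReal ρ * ENNReal.ofReal ((ρ * sin t) ^ (finrank ℝ E - 2)) =
            ENNReal.ofReal (ρ ^ (finrank ℝ E - 1)) *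
              ENNReal.ofReal (sin t ^ (finrank ℝ E - 2)) := by
          rw [← ENNReal.ofReal_mul hρ.le, ← ENNReal.ofReal_mul (by positivity), mul_pow,
            ← mul_assoc, ← pow_succ', show finrank ℝ E - 2 + 1 = finrank ℝ E - 1 by omega]
        simp only [smul_add, smul_smul, ← mul_assoc, hjac]

theorem lintegral_toSphere_eq_lintegral_slices (hd : 2 ≤ finrank ℝ E) {e : E} (he : ‖e‖ = 1)
    {f : E → ℝ≥0∞} (hf : Measurable f) :
    ∫⁻ y : sphere (0 : E) 1, f y ∂volume.toSphere =
      ∫⁻ z : sphere (0 : (ℝ ∙ e)ᗮ) 1, (∫⁻ t in Ioo 0 π,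
        ENNReal.ofReal (sin t ^ (finrank ℝ E - 2)) * f (cos t • e + sin t • (z : E)))
          ∂volume.toSphere := by
  have : Nontrivial E := nontrivial_of_finrank_pos (R := ℝ) (by omega)
  have hw := measurable_unitRadialWeight (finrank ℝ E)
  rw [lintegral_toSphere_eq_lintegral volume hf,
    lintegral_eq_lintegral_spherical hd he (by fun_prop)]
  refine lintegral_congr fun z => ?_
  have hnorm (t : ℝ) : ‖cos t • e + sin t • (z : E)‖ = 1 :=
    norm_cos_smul_add_sin_smul he (norm_eq_of_mem_sphere z)
      (Submodule.mem_orthogonal_singleton_iff_inner_right.1 z.1.2) t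
  set g := fun t => ENNReal.ofReal (sin t ^ (finrank ℝ E - 2)) * f (cos t • e + sin t • (z : E))
  have hg : Measurable g := by fun_prop
  calc _ = ∫⁻ ρ in Ioi (0 : ℝ), ENNReal.ofReal (ρ ^ (finrank ℝ E - 1)) *
          unitRadialWeight (finrank ℝ E) ρ * ∫⁻ t in Ioo 0 π, g t := by
        refine setLIntegral_congr_fun measurableSet_Ioi fun ρ (hρ : 0 < ρ) => ?_
        rw [← lintegral_const_mul _ hg]
        refine lintegral_congr fun t => ?_
        simp only [norm_smul, hnorm, norm_of_nonneg hρ.le, mul_one, smul_smul,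
          inv_mul_cancel₀ hρ.ne', one_smul, g]
        ring
    _ = ∫⁻ t in Ioo 0 π, g t := by
        rw [lintegral_mul_const _ (by fun_prop), lintegral_pow_mul_unitRadialWeight, one_mul]

theorem toSphere_univ_eq_ofReal_sphereArea [Nontrivial E] :
    (volume : Measure E).toSphere univ = ENNReal.ofReal (sphereArea (finrank ℝ E)) := by
  have hpos : (0 : ℝ) < finrank ℝ E := Nat.cast_pos.2 finrank_pos
  rw [Measure.toSphere_apply_univ, InnerProductSpace.volume_ball, ENNReal.ofReal_one, one_pow,
    one_mul, ← ENNReal.ofReal_natCast, ← ENNReal.ofReal_mul (Nat.cast_nonneg _), sphereArea,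
    Gamma_add_one (half_pos hpos).ne', sqrt_eq_rpow, ← rpow_mul_natCast pi_nonneg]
  congr 1
  field_simp

theorem lintegral_toSphere_inner (hd : 2 ≤ finrank ℝ E) {e : E} (he : ‖e‖ = 1)
    {f : ℝ → ℝ≥0∞} (hf : Measurable f) :
    ∫⁻ y : sphere (0 : E) 1, f ⟪e, y⟫ ∂volume.toSphere =
      ENNReal.ofReal (sphereArea (finrank ℝ E - 1)) *
        ∫⁻ t in Ioo 0 π, ENNReal.ofReal (sin t ^ (finrank ℝ E - 2)) * f (cos t) := by
  have hfin := finrank_orthogonal_singleton (norm_ne_zero_iff.1 (he ▸ one_ne_zero))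
  have : Nontrivial (ℝ ∙ e)ᗮ := nontrivial_of_finrank_pos (R := ℝ) (by omega)
  rw [lintegral_toSphere_eq_lintegral_slices hd he (f := fun y => f ⟪e, y⟫) (by fun_prop)]
  simp only [inner_add_right, real_inner_smul_right, real_inner_self_eq_norm_sq, he,
    Submodule.mem_orthogonal_singleton_iff_inner_right.1 (Subtype.prop _)]
  rw [← hfin, ← toSphere_univ_eq_ofReal_sphereArea, mul_comm, ← lintegral_const]
  simp

theorem lintegral_toSphere_inner_inner (hd : 3 ≤ finrank ℝ E) {e v : E} (he : ‖e‖ = 1)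
    (hv : ‖v‖ = 1) (hev : ⟪e, v⟫ = 0) {f : ℝ × ℝ → ℝ≥0∞} (hf : Measurable f) :
    ∫⁻ y : sphere (0 : E) 1, f (⟪e, y⟫, ⟪v, y⟫) ∂volume.toSphere =
      ENNReal.ofReal (sphereArea (finrank ℝ E - 2)) *
        ∫⁻ φ in Ioo 0 π, ENNReal.ofReal (sin φ ^ (finrank ℝ E - 3)) *
          ∫⁻ t in Ioo 0 π, ENNReal.ofReal (sin t ^ (finrank ℝ E - 2)) *
            f (cos t, sin t * cos φ) := by
  have hfin := finrank_orthogonal_singleton (norm_ne_zero_iff.1 (he ▸ one_ne_zero))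
  let w : (ℝ ∙ e)ᗮ := ⟨v, Submodule.mem_orthogonal_singleton_iff_inner_right.2 hev⟩
  have hslice (z : (ℝ ∙ e)ᗮ) (t : ℝ) : f (⟪e, cos t • e + sin t • (z : E)⟫,
      ⟪v, cos t • e + sin t • (z : E)⟫) = f (cos t, sin t * ⟪w, z⟫) := by
    simp [inner_add_right, real_inner_smul_right, he, real_inner_comm e v, hev, w,
      Submodule.mem_orthogonal_singleton_iff_inner_right.1 z.2]
  rw [lintegral_toSphere_eq_lintegral_slices (by omega) he
    (f := fun y => f (⟪e, y⟫, ⟪v, y⟫)) (by fun_prop)]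
  simp only [hslice]
  rw [lintegral_toSphere_inner (by omega) (e := w) hv (f := fun s => ∫⁻ t in Ioo 0 π,
    ENNReal.ofReal (sin t ^ (finrank ℝ E - 2)) * f (cos t, sin t * s))
      (Measurable.lintegral_prod_right' (f := fun q : ℝ × ℝ => ENNReal.ofReal
        (sin q.2 ^ (finrank ℝ E - 2)) * f (cos q.2, sin q.2 * q.1)) (by fun_prop)), hfin,
    Nat.sub_sub, Nat.sub_sub]

end InnerProductSpace

end Sphere

theorem sphereArea_pos {n : ℕ} (hn : 0 < n) : 0 < sphereArea n := by
  have : 0 < Gamma ((n : ℝ) / 2) := Gamma_pos_of_pos (by positivity)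
  unfold sphereArea
  positivity

theorem sphereArea_add_two {n : ℕ} (hn : 0 < n) :
    sphereArea (n + 2) = 2 * π / n * sphereArea n := by
  have hn' : (n : ℝ) / 2 ≠ 0 := by positivity
  unfold sphereArea
  rw [Nat.cast_add, Nat.cast_two, add_div, div_self two_ne_zero, Gamma_add_one hn',
    rpow_add pi_pos, rpow_one]
  field_simp

section ChordAngle

variable {r θ : ℝ}

/-- The distance to the point `r • e` of a unit vector `y` with `⟪e, y⟫ = a`, where `‖e‖ = 1`. -/
def axialDist (r a : ℝ) : ℝ := √(1 - 2 * r * a + r ^ 2)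

/-- The polar angle `t` of a point of the unit circle as a function of the angle `θ` for which the
chord through that point and `(r, 0)` meets the circle again at `-(cos 2θ, sin 2θ)`. -/
def chordAngle (r θ : ℝ) : ℝ := 2 * arctan ((1 - r) / (1 + r) * tan θ)

theorem cos_two_mul_arctan (z : ℝ) : cos (2 * arctan z) = (1 - z ^ 2) / (1 + z ^ 2) := by
  rw [cos_two_mul, cos_sq_arctan]
  field_simp
  ring

theorem sin_two_mul_arctan (z : ℝ) : sin (2 * arctan z) = 2 * z / (1 + z ^ 2) := by
  rw [sin_two_mul, sin_arctan, cos_arctan]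
  field_simp
  rw [sq_sqrt (by positivity)]

theorem axialDist_cos_chordAngle (hr : |r| < 1) (hθ : 0 < cos θ) :
    axialDist r (cos (chordAngle r θ)) =
      (1 - r) / (cos θ * √(1 + ((1 - r) / (1 + r) * tan θ) ^ 2)) := by
  have h₁ : 0 < 1 + r := by linarith [(abs_lt.1 hr).1]
  have : 0 < 1 - r := by linarith [(abs_lt.1 hr).2]
  refine (sqrt_eq_iff_mul_self_eq_of_pos (by positivity)).2 ?_
  rw [← sq, chordAngle, cos_two_mul_arctan, div_pow, mul_pow, sq_sqrt (by positivity),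
    tan_eq_sin_div_cos]
  field_simp
  rw [sin_sq]
  ring

theorem sq_axialDist_cos (r t : ℝ) : axialDist r (cos t) ^ 2 = 1 - 2 * r * cos t + r ^ 2 := by
  refine sq_sqrt ?_
  nlinarith [sq_nonneg (r - cos t), cos_sq_le_one t]

theorem one_sub_sq_mul_cos_chordAngle_sub (hr : |r| < 1) (hθ : 0 < cos θ) :
    (1 - r ^ 2) * (cos (chordAngle r θ) - r) =
      axialDist r (cos (chordAngle r θ)) ^ 2 * (cos (2 * θ) + r) := by
  have h₁ : 0 < 1 + r := by linarith [(abs_lt.1 hr).1]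
  rw [sq_axialDist_cos, chordAngle, cos_two_mul_arctan, cos_two_mul, tan_eq_sin_div_cos]
  field_simp
  rw [sin_sq]
  ring

theorem one_sub_sq_mul_sin_chordAngle (hr : |r| < 1) (hθ : 0 < cos θ) :
    (1 - r ^ 2) * sin (chordAngle r θ) =
      axialDist r (cos (chordAngle r θ)) ^ 2 * sin (2 * θ) := by
  have h₁ : 0 < 1 + r := by linarith [(abs_lt.1 hr).1]
  rw [sq_axialDist_cos, chordAngle, cos_two_mul_arctan, sin_two_mul_arctan, sin_two_mul,
    tan_eq_sin_div_cos]
  field_simp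
  rw [sin_sq]
  ring

theorem hasDerivAt_chordAngle (hr : |r| < 1) (hθ : 0 < cos θ) :
    HasDerivAt (chordAngle r) (2 * axialDist r (cos (chordAngle r θ)) ^ 2 / (1 - r ^ 2)) θ := by
  have h₁ : 0 < 1 + r := by linarith [(abs_lt.1 hr).1]
  have h₂ : 0 < 1 - r := by linarith [(abs_lt.1 hr).2]
  have hd := (((hasDerivAt_tan hθ.ne').const_mul ((1 - r) / (1 + r))).arctan.const_mul 2)
  refine hd.congr_deriv ?_
  rw [axialDist_cos_chordAngle hr hθ, div_pow, mul_pow (cos θ), sq_sqrt (by positivity),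
    show 1 - r ^ 2 = (1 - r) * (1 + r) by ring]
  field_simp

theorem image_chordAngle (hr : |r| < 1) : chordAngle r '' Ioo 0 (π / 2) = Ioo 0 π := by
  obtain ⟨hr₁, hr₂⟩ := abs_lt.1 hr
  have hk : 0 < (1 - r) / (1 + r) := div_pos (by linarith) (by linarith)
  ext t
  constructor
  · rintro ⟨θ, hθ, rfl⟩
    have htan := tan_pos_of_pos_of_lt_pi_div_two hθ.1 hθ.2
    have hpos : 0 < arctan ((1 - r) / (1 + r) * tan θ) := arctan_pos.2 (by positivity)
    have hlt := arctan_lt_pi_div_two ((1 - r) / (1 + r) * tan θ)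
    constructor <;> rw [chordAngle] <;> linarith
  · rintro ⟨ht₀, htπ⟩
    have htan : 0 < tan (t / 2) := tan_pos_of_pos_of_lt_pi_div_two (by linarith) (by linarith)
    refine ⟨arctan (tan (t / 2) / ((1 - r) / (1 + r))),
      ⟨arctan_pos.2 (by positivity), arctan_lt_pi_div_two _⟩, ?_⟩
    rw [chordAngle, tan_arctan, mul_div_cancel₀ _ hk.ne',
      arctan_tan (by linarith [pi_pos]) (by linarith)]
    ring

theorem monotoneOn_chordAngle (hr : |r| < 1) : MonotoneOn (chordAngle r) (Ioo 0 (π / 2)) := by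
  obtain ⟨hr₁, hr₂⟩ := abs_lt.1 hr
  have hk : 0 < (1 - r) / (1 + r) := div_pos (by linarith) (by linarith)
  intro θ hθ θ' hθ' hle
  have htan : tan θ ≤ tan θ' := strictMonoOn_tan.monotoneOn
    ⟨by linarith [hθ.1, pi_pos], hθ.2⟩ ⟨by linarith [hθ'.1, pi_pos], hθ'.2⟩ hle
  unfold chordAngle
  gcongr

theorem lintegral_Ioo_zero_pi_eq_lintegral_chordAngle (hr : |r| < 1) (f : ℝ → ℝ≥0∞) :
    ∫⁻ t in Ioo 0 π, f t = ∫⁻ θ in Ioo 0 (π / 2),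
      ENNReal.ofReal (2 * axialDist r (cos (chordAngle r θ)) ^ 2 / (1 - r ^ 2)) *
        f (chordAngle r θ) := by
  rw [← image_chordAngle hr]
  exact lintegral_image_eq_lintegral_deriv_mul_of_monotoneOn measurableSet_Ioo
    (fun θ hθ => (hasDerivAt_chordAngle hr (cos_pos_of_mem_Ioo
      ⟨by linarith [hθ.1, pi_pos], hθ.2⟩)).hasDerivWithinAt) (monotoneOn_chordAngle hr) f

/-- The inner product of `e + γ • v` with the gradient at `r • e` of the Poisson kernel with pole
at the unit vector `y`, in terms of `a = ⟪e, y⟫` and `b = ⟪v, y⟫`; here `e, v` are orthonormal. -/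
def axialKernel (n : ℕ) (r γ a b : ℝ) : ℝ :=
  (n * (1 - r ^ 2) / axialDist r a ^ 2 * (a - r + γ * b) - 2 * r) / axialDist r a ^ n

@[fun_prop]
theorem measurable_axialKernel (n : ℕ) (r γ : ℝ) :
    Measurable fun p : ℝ × ℝ => axialKernel n r γ p.1 p.2 := by
  unfold axialKernel axialDist
  fun_prop

theorem axialKernel_chordAngle (hr : |r| < 1) (hθ : 0 < cos θ) (n : ℕ) (γ φ : ℝ) :
    axialKernel n r γ (cos (chordAngle r θ)) (sin (chordAngle r θ) * cos φ) =
      (n * cos (2 * θ) + n * γ * sin (2 * θ) * cos φ + (n - 2) * r) /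
        axialDist r (cos (chordAngle r θ)) ^ n := by
  have hρ : axialDist r (cos (chordAngle r θ)) ≠ 0 := by
    rw [axialDist_cos_chordAngle hr hθ]
    have : 0 < 1 - r := by linarith [(abs_lt.1 hr).2]
    positivity
  have hcos := one_sub_sq_mul_cos_chordAngle_sub hr hθ
  have hsin := one_sub_sq_mul_sin_chordAngle hr hθ
  rw [axialKernel]
  congr 1
  field_simp
  linear_combination n * hcos + n * γ * cos φ * hsin

theorem Gfun_eq_abs_mul_pow {n : ℕ} (hn : 2 ≤ n) (θ φ r γ : ℝ) :
    Gfun n θ φ r γ = |n * cos (2 * θ) + n * γ * sin (2 * θ) * cos φ + (n - 2) * r| *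
      (sin θ / √(1 + ((1 - r) / (1 + r) * tan θ) ^ 2)) ^ (n - 2) := by
  have hexp : ((n : ℝ) - 2) / 2 = 1 / 2 * (n - 2 : ℕ) := by push_cast [hn]; ring
  rw [Gfun, hexp, rpow_mul_natCast (by positivity), ← sqrt_eq_rpow, ← mul_pow,
    div_pow (sin θ), mul_div_assoc]

theorem chordAngle_jacobian_mul_axialKernel {n : ℕ} (hn : 2 ≤ n) (hr : |r| < 1) (hθ : 0 < cos θ)
    (γ φ : ℝ) :
    2 * axialDist r (cos (chordAngle r θ)) ^ 2 / (1 - r ^ 2) * (sin (chordAngle r θ) ^ (n - 2) *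
      |axialKernel n r γ (cos (chordAngle r θ)) (sin (chordAngle r θ) * cos φ)|) =
      2 ^ (n - 1) / ((1 + r) ^ (n - 1) * (1 - r)) * Gfun n θ φ r γ := by
  obtain ⟨m, rfl⟩ := Nat.exists_eq_add_of_le' hn
  have h₁ : 0 < 1 + r := by linarith [(abs_lt.1 hr).1]
  have h₂ : 0 < 1 - r := by linarith [(abs_lt.1 hr).2]
  have hfac : 1 - r ^ 2 = (1 - r) * (1 + r) := by ring
  have hr2 : 1 - r ^ 2 ≠ 0 := hfac ▸ (mul_pos h₂ h₁).ne'
  have hρ := axialDist_cos_chordAngle hr hθ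
  have hρpos : 0 < axialDist r (cos (chordAngle r θ)) := by rw [hρ]; positivity
  have hsin : sin (chordAngle r θ) = axialDist r (cos (chordAngle r θ)) ^ 2 * sin (2 * θ) /
      (1 - r ^ 2) := by
    rw [← one_sub_sq_mul_sin_chordAngle hr hθ, mul_div_cancel_left₀ _ hr2]
  have hρsin : axialDist r (cos (chordAngle r θ)) * sin (2 * θ) =
      2 * (1 - r) * (sin θ / √(1 + ((1 - r) / (1 + r) * tan θ) ^ 2)) := by
    rw [hρ, sin_two_mul]
    field_simp
  rw [axialKernel_chordAngle hr hθ, Gfun_eq_abs_mul_pow hn, abs_div, abs_of_pos (pow_pos hρpos _),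
    hsin]
  set ρ := axialDist r (cos (chordAngle r θ))
  set q := sin θ / √(1 + ((1 - r) / (1 + r) * tan θ) ^ 2)
  set N := |((m + 2 : ℕ) : ℝ) * cos (2 * θ) + (m + 2 : ℕ) * γ * sin (2 * θ) * cos φ +
    ((m + 2 : ℕ) - 2) * r|
  calc _ = 2 / (1 - r ^ 2) ^ (m + 1) * N * (ρ * sin (2 * θ)) ^ m := by
        rw [Nat.add_sub_cancel, div_pow, mul_pow, mul_pow]
        field_simp
        ring
    _ = 2 / (1 - r ^ 2) ^ (m + 1) * N * (2 * (1 - r) * q) ^ m := by rw [hρsin]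
    _ = _ := by
        rw [Nat.add_sub_cancel, show m + 2 - 1 = m + 1 from rfl, hfac, mul_pow, mul_pow, mul_pow]
        field_simp
        ring

theorem lintegral_sin_pow_mul_axialKernel {n : ℕ} (hn : 2 ≤ n) (hr : |r| < 1) (γ φ : ℝ) :
    ∫⁻ t in Ioo 0 π, ENNReal.ofReal (sin t ^ (n - 2)) *
        ENNReal.ofReal |axialKernel n r γ (cos t) (sin t * cos φ)| =
      ENNReal.ofReal (2 ^ (n - 1) / ((1 + r) ^ (n - 1) * (1 - r))) *
        ∫⁻ θ in Ioo 0 (π / 2), ENNReal.ofReal (Gfun n θ φ r γ) := by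
  have h₁ : 0 < 1 + r := by linarith [(abs_lt.1 hr).1]
  have h₂ : 0 < 1 - r := by linarith [(abs_lt.1 hr).2]
  have hr2 : 0 < 1 - r ^ 2 := by nlinarith
  rw [lintegral_Ioo_zero_pi_eq_lintegral_chordAngle hr,
    ← lintegral_const_mul' _ _ ENNReal.ofReal_ne_top]
  refine setLIntegral_congr_fun measurableSet_Ioo fun θ hθ => ?_
  have hcos : 0 < cos θ := cos_pos_of_mem_Ioo ⟨by linarith [hθ.1, pi_pos], hθ.2⟩
  have hsin : 0 < sin (chordAngle r θ) := sin_pos_of_mem_Ioo <| by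
    rw [← image_chordAngle hr]
    exact mem_image_of_mem _ hθ
  rw [← ENNReal.ofReal_mul (by positivity), ← ENNReal.ofReal_mul (by positivity),
    ← ENNReal.ofReal_mul (by positivity), chordAngle_jacobian_mul_axialKernel hn hr hcos]

end ChordAngle

section AngularIntegral

variable {n : ℕ} {θ φ r γ : ℝ}

/-- The double integral over the angles in the formula for the sharp coefficient. -/
def angularIntegral (n : ℕ) (r γ : ℝ) : ℝ :=
  ∫ φ in (0 : ℝ)..π, sin φ ^ (n - 3) * ∫ θ in (0 : ℝ)..(π / 2), Gfun n θ φ r γ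

theorem Gfun_nonneg (hθ : 0 ≤ sin θ) : 0 ≤ Gfun n θ φ r γ := by
  unfold Gfun
  positivity

theorem abs_Gfun_le (hn : 2 ≤ n) (θ φ r γ : ℝ) : |Gfun n θ φ r γ| ≤ n + n * |γ| + n * |r| := by
  have hn₂ : (2 : ℝ) ≤ n := mod_cast hn
  have hn' : |(n : ℝ) - 2| ≤ n := abs_le.2 ⟨by linarith, by linarith⟩
  have hfactor : |sin θ / √(1 + ((1 - r) / (1 + r) * tan θ) ^ 2)| ≤ 1 := by
    have hden : 1 ≤ √(1 + ((1 - r) / (1 + r) * tan θ) ^ 2) :=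
      one_le_sqrt.2 (by linarith [sq_nonneg ((1 - r) / (1 + r) * tan θ)])
    rw [abs_div, abs_of_pos (by linarith : 0 < √(1 + ((1 - r) / (1 + r) * tan θ) ^ 2))]
    exact div_le_one_of_le₀ ((abs_sin_le_one θ).trans hden) (sqrt_nonneg _)
  rw [Gfun_eq_abs_mul_pow hn, abs_mul, abs_abs, abs_pow]
  calc _ ≤ |n * cos (2 * θ) + n * γ * sin (2 * θ) * cos φ + (n - 2) * r| * 1 := by
        gcongr
        exact pow_le_one₀ (abs_nonneg _) hfactor
    _ ≤ |n * cos (2 * θ)| + |n * γ * sin (2 * θ) * cos φ| + |(n - 2) * r| := by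
        rw [mul_one]
        exact abs_add_three _ _ _
    _ ≤ n * 1 + n * |γ| * 1 * 1 + n * |r| := by
        simp only [abs_mul, Nat.abs_cast]
        gcongr
        exacts [abs_cos_le_one _, abs_sin_le_one _, abs_cos_le_one _]
    _ = _ := by ring

theorem measurable_Gfun (n : ℕ) (r γ : ℝ) :
    Measurable fun p : ℝ × ℝ => Gfun n p.2 p.1 r γ := by
  have htan : Measurable tan := by
    simp_rw [funext tan_eq_sin_div_cos]
    fun_prop
  unfold Gfun
  fun_prop

theorem angularIntegral_nonneg (n : ℕ) (r γ : ℝ) : 0 ≤ angularIntegral n r γ :=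
  intervalIntegral.integral_nonneg pi_nonneg fun φ hφ =>
    mul_nonneg (pow_nonneg (sin_nonneg_of_mem_Icc hφ) _) <|
      intervalIntegral.integral_nonneg (by positivity) fun θ hθ =>
        Gfun_nonneg (sin_nonneg_of_nonneg_of_le_pi hθ.1 (by linarith [hθ.2, pi_pos]))

theorem ofReal_angularIntegral (hn : 2 ≤ n) (r γ : ℝ) :
    ENNReal.ofReal (angularIntegral n r γ) =
      ∫⁻ φ in Ioo 0 π, ENNReal.ofReal (sin φ ^ (n - 3)) *
        ∫⁻ θ in Ioo 0 (π / 2), ENNReal.ofReal (Gfun n θ φ r γ) := by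
  have hmeas := measurable_Gfun n r γ
  set F : ℝ × ℝ → ℝ := fun p => sin p.1 ^ (n - 3) * Gfun n p.2 p.1 r γ
  set ν := (volume.restrict (Ioo 0 π)).prod (volume.restrict (Ioo 0 (π / 2)))
  have hsin : ∀ᵐ p ∂ν, 0 ≤ sin p.1 ∧ 0 ≤ sin p.2 := by
    simp only [ν, Measure.prod_restrict]
    refine (ae_restrict_iff' (measurableSet_Ioo.prod measurableSet_Ioo)).2 (.of_forall ?_)
    rintro p ⟨hφ, hθ⟩
    exact ⟨(sin_pos_of_mem_Ioo hφ).le, (sin_pos_of_mem_Ioo ⟨hθ.1, by linarith [hθ.2, pi_pos]⟩).le⟩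
  have hF : Integrable F ν := by
    refine .of_bound (C := 1 * (n + n * |γ| + n * |r|))
      (Measurable.aestronglyMeasurable (by fun_prop)) (.of_forall fun p => ?_)
    rw [norm_eq_abs, abs_mul, abs_pow]
    gcongr
    exacts [pow_le_one₀ (abs_nonneg _) (abs_sin_le_one _), abs_Gfun_le hn _ _ _ _]
  calc ENNReal.ofReal (angularIntegral n r γ) = ENNReal.ofReal (∫ p, F p ∂ν) := by
        rw [integral_prod _ hF, angularIntegral, intervalIntegral.integral_of_le pi_nonneg,
          integral_Ioc_eq_integral_Ioo]
        simp only [F, integral_const_mul, integral_Ioc_eq_integral_Ioo,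
          intervalIntegral.integral_of_le pi_div_two_pos.le]
    _ = ∫⁻ p, ENNReal.ofReal (F p) ∂ν :=
        ofReal_integral_eq_lintegral_ofReal hF <| hsin.mono fun p hp =>
          mul_nonneg (pow_nonneg hp.1 _) (Gfun_nonneg hp.2)
    _ = _ := by
        rw [lintegral_prod _ (by fun_prop)]
        refine setLIntegral_congr_fun measurableSet_Ioo fun φ hφ => ?_
        simp only [F, ENNReal.ofReal_mul (pow_nonneg (sin_pos_of_mem_Ioo hφ).le _),
          lintegral_const_mul' _ _ ENNReal.ofReal_ne_top]

theorem one_div_sphereArea_mul_integral_abs_axialKernel {E : Type*} [NormedAddCommGroup E]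
    [InnerProductSpace ℝ E] [FiniteDimensional ℝ E] [MeasurableSpace E] [BorelSpace E]
    {e v : E} (he : ‖e‖ = 1) (hv : ‖v‖ = 1) (hev : ⟪e, v⟫ = 0) (hn : 3 ≤ finrank ℝ E)
    (hr : |r| < 1) (γ : ℝ) :
    1 / sphereArea (finrank ℝ E) * ∫ y : sphere (0 : E) 1,
        |axialKernel (finrank ℝ E) r γ ⟪e, y⟫ ⟪v, y⟫| ∂volume.toSphere =
      2 ^ (finrank ℝ E - 2) * (finrank ℝ E - 2) /
        (π * (1 + r) ^ (finrank ℝ E - 1) * (1 - r)) * angularIntegral (finrank ℝ E) r γ := by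
  have h₁ : 0 < 1 + r := by linarith [(abs_lt.1 hr).1]
  have h₂ : 0 < 1 - r := by linarith [(abs_lt.1 hr).2]
  have hJ := angularIntegral_nonneg (finrank ℝ E) r γ
  have hlintegral : ∫⁻ y : sphere (0 : E) 1,
      ENNReal.ofReal |axialKernel (finrank ℝ E) r γ ⟪e, y⟫ ⟪v, y⟫| ∂volume.toSphere =
      ENNReal.ofReal (sphereArea (finrank ℝ E - 2) *
        (2 ^ (finrank ℝ E - 1) / ((1 + r) ^ (finrank ℝ E - 1) * (1 - r)) *
          angularIntegral (finrank ℝ E) r γ)) := by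
    rw [lintegral_toSphere_inner_inner hn he hv hev
      (f := fun p => ENNReal.ofReal |axialKernel (finrank ℝ E) r γ p.1 p.2|) (by fun_prop)]
    simp only [lintegral_sin_pow_mul_axialKernel (by omega : 2 ≤ finrank ℝ E) hr,
      mul_left_comm (ENNReal.ofReal (sin _ ^ _))]
    rw [lintegral_const_mul' _ _ ENNReal.ofReal_ne_top, ← ofReal_angularIntegral (by omega),
      ← ENNReal.ofReal_mul (by positivity), ← ENNReal.ofReal_mul (sphereArea_pos (by omega)).le]
  rw [integral_eq_lintegral_of_nonneg_ae (.of_forall fun y => abs_nonneg _)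
    (Measurable.aestronglyMeasurable (by fun_prop)), hlintegral]
  obtain ⟨m, hm⟩ := Nat.exists_eq_add_of_le' (by omega : 2 ≤ finrank ℝ E)
  have hm0 : 0 < m := by omega
  have hω := sphereArea_pos hm0
  rw [hm] at hJ ⊢
  rw [Nat.add_sub_cancel, show m + 2 - 1 = m + 1 from rfl, ENNReal.toReal_ofReal (by positivity),
    sphereArea_add_two hm0]
  push_cast
  field_simp
  ring

end AngularIntegral

section PoissonKernel

section Normed

variable {E : Type*} [NormedAddCommGroup E] {x : E}

theorem ne_of_mem_unitSphere (hx : ‖x‖ < 1) (y : sphere (0 : E) 1) : (y : E) ≠ x :=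
  ne_of_apply_ne norm (by simpa using hx.ne')

/-- The Poisson kernel of the unit ball of `ℝⁿ` up to the factor `1 / ωₙ`; the exponent `n` is kept
independent of the dimension of `E`. -/
def ballPoissonKernel (n : ℕ) (x y : E) : ℝ := (1 - ‖x‖ ^ 2) / ‖y - x‖ ^ n

theorem continuous_ballPoissonKernel_sphere (n : ℕ) (hx : ‖x‖ < 1) :
    Continuous fun y : sphere (0 : E) 1 => ballPoissonKernel n x y := by
  have hne (y : sphere (0 : E) 1) : ‖(y : E) - x‖ ≠ 0 :=
    (norm_sub_pos_iff.2 (ne_of_mem_unitSphere hx y)).ne'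
  unfold ballPoissonKernel
  fun_prop (disch := simp [hne])

end Normed

variable {E : Type*} [NormedAddCommGroup E] [InnerProductSpace ℝ E] {x y : E}

/-- The gradient of `ballPoissonKernel n x y` with respect to `x`. -/
def ballPoissonKernelGrad (n : ℕ) (x y : E) : E :=
  (‖y - x‖ ^ n)⁻¹ • ((n * (1 - ‖x‖ ^ 2) / ‖y - x‖ ^ 2) • (y - x) - (2 : ℝ) • x)

theorem hasFDerivAt_ballPoissonKernel (n : ℕ) (hxy : y ≠ x) :
    HasFDerivAt (ballPoissonKernel n · y) (innerSL ℝ (ballPoissonKernelGrad n x y)) x := by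
  have hρ : 0 < ‖y - x‖ := norm_sub_pos_iff.2 hxy
  have hnum : HasFDerivAt (fun z : E => 1 - ‖z‖ ^ 2) (-(2 • innerSL ℝ x)) x :=
    (hasStrictFDerivAt_norm_sq x).hasFDerivAt.const_sub 1
  have hdist : HasFDerivAt (fun z => ‖y - z‖) (-(‖y - x‖⁻¹ • innerSL ℝ (y - x))) x := by
    have := ((hasFDerivAt_id x).const_sub y).norm_sq.sqrt (pow_pos hρ 2).ne'
    simp only [id, sqrt_sq (norm_nonneg _)] at this
    refine this.congr_fderiv ?_
    ext l
    simp only [one_div, mul_inv_rev, map_sub, ContinuousLinearMap.comp_neg,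
      ContinuousLinearMap.comp_id, neg_sub, smul_apply, sub_apply, coe_innerSL_apply, nsmul_eq_mul,
      Nat.cast_ofNat, smul_eq_mul, neg_apply]
    field_simp
    ring
  have hinv : HasDerivAt (fun s : ℝ => (s ^ n)⁻¹)
      (-(n * ‖y - x‖ ^ (n - 1)) / (‖y - x‖ ^ n) ^ 2) ‖y - x‖ :=
    (hasDerivAt_pow n _).fun_inv (pow_pos hρ n).ne'
  refine ((hnum.mul (hinv.comp_hasFDerivAt x hdist)).congr_fderiv ?_).congr_of_eventuallyEq
    (.of_forall fun z => div_eq_mul_inv _ _)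
  ext l
  simp only [map_sub, smul_neg, Function.comp_apply, add_apply, neg_apply, smul_apply, sub_apply,
    coe_innerSL_apply, smul_eq_mul, nsmul_eq_mul, Nat.cast_ofNat, ballPoissonKernelGrad, map_smul]
  cases n <;> field_simp <;> push_cast <;> ring

theorem continuousOn_ballPoissonKernelGrad (n : ℕ) :
    ContinuousOn (fun p : E × E => ballPoissonKernelGrad n p.1 p.2) {p | p.2 ≠ p.1} := by
  unfold ballPoissonKernelGrad
  fun_prop (disch := simp [sub_eq_zero]; try tauto)

theorem exists_norm_ballPoissonKernelGrad_le [FiniteDimensional ℝ E] (n : ℕ) {s : ℝ} (hs : s < 1) :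
    ∃ C, ∀ x : E, ‖x‖ ≤ s → ∀ y : sphere (0 : E) 1, ‖ballPoissonKernelGrad n x y‖ ≤ C := by
  obtain ⟨C, hC⟩ := ((isCompact_closedBall (0 : E) s).prod (isCompact_sphere (0 : E) 1)
    ).exists_bound_of_continuousOn ((continuousOn_ballPoissonKernelGrad n).mono fun p hp =>
      ne_of_mem_unitSphere ((mem_closedBall_zero_iff.1 hp.1).trans_lt hs) ⟨p.2, hp.2⟩)
  exact ⟨C, fun x hx y => hC (x, y) ⟨mem_closedBall_zero_iff.2 hx, y.2⟩⟩

theorem continuous_ballPoissonKernelGrad_sphere (n : ℕ) (hx : ‖x‖ < 1) :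
    Continuous fun y : sphere (0 : E) 1 => ballPoissonKernelGrad n x y :=
  (continuousOn_ballPoissonKernelGrad n).comp_continuous
    (f := fun y : sphere (0 : E) 1 => (x, (y : E))) (by fun_prop) (ne_of_mem_unitSphere hx)

theorem inner_ballPoissonKernelGrad (n : ℕ) (r γ : ℝ) {e v : E} (he : ‖e‖ = 1) (hev : ⟪e, v⟫ = 0)
    (hy : ‖y‖ = 1) : ⟪ballPoissonKernelGrad n (r • e) y, e + γ • v⟫ =
      axialKernel n r γ ⟪e, y⟫ ⟪v, y⟫ := by
  have hre : ‖r • e‖ ^ 2 = r ^ 2 := by rw [norm_smul, he, mul_one, norm_eq_abs, sq_abs]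
  have hdist : ‖y - r • e‖ = axialDist r ⟪e, y⟫ := by
    rw [axialDist, ← sqrt_sq (norm_nonneg (y - r • e)), norm_sub_sq_real, hy, hre,
      real_inner_smul_right, real_inner_comm]
    ring_nf
  rw [ballPoissonKernelGrad, axialKernel, hre, hdist]
  simp only [inner_add_right, real_inner_smul_left, real_inner_smul_right, inner_sub_left,
    real_inner_self_eq_norm_sq, he, hev, real_inner_comm e y, real_inner_comm v y]
  ring

variable [FiniteDimensional ℝ E] [MeasurableSpace E] [BorelSpace E]
  {μ : Measure (sphere (0 : E) 1)} {g : sphere (0 : E) 1 → ℝ}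

theorem integrable_ballPoissonKernel_mul (n : ℕ) (hg : Integrable g μ) (hx : ‖x‖ < 1) :
    Integrable (fun y : sphere (0 : E) 1 => ballPoissonKernel n x y * g y) μ := by
  have hcont := continuous_ballPoissonKernel_sphere n hx
  obtain ⟨C, hC⟩ := isCompact_univ.exists_bound_of_continuousOn hcont.continuousOn
  exact hg.bdd_mul hcont.aestronglyMeasurable (.of_forall fun y => hC y (mem_univ y))

theorem integrable_smul_ballPoissonKernelGrad (n : ℕ) (hg : Integrable g μ) (hx : ‖x‖ < 1) :
    Integrable (fun y : sphere (0 : E) 1 => g y • ballPoissonKernelGrad n x y) μ := by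
  obtain ⟨C, hC⟩ := exists_norm_ballPoissonKernelGrad_le (E := E) n hx
  exact hg.smul_bdd C (continuous_ballPoissonKernelGrad_sphere n hx).aestronglyMeasurable
    (.of_forall (hC x le_rfl))

theorem hasGradientAt_integral_ballPoissonKernel (n : ℕ) (hg : Integrable g μ) (hx : ‖x‖ < 1) :
    HasGradientAt (fun z : E => ∫ y : sphere (0 : E) 1, ballPoissonKernel n z y * g y ∂μ)
      (∫ y : sphere (0 : E) 1, g y • ballPoissonKernelGrad n x y ∂μ) x := by
  obtain ⟨s, hxs, hs⟩ := exists_between hx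
  obtain ⟨C, hC⟩ := exists_norm_ballPoissonKernelGrad_le (E := E) n hs
  have hnhds : ball (0 : E) s ∈ nhds x := isOpen_ball.mem_nhds (mem_ball_zero_iff.2 hxs)
  have hlt {z : E} (hz : z ∈ ball 0 s) : ‖z‖ < 1 := (mem_ball_zero_iff.1 hz).trans hs
  have hgrad := integrable_smul_ballPoissonKernelGrad n hg hx
  refine (hasFDerivAt_integral_of_dominated_of_fderiv_le
    (F' := fun z (y : sphere (0 : E) 1) => innerSL ℝ (g y • ballPoissonKernelGrad n z (y : E)))
    (bound := fun y => C * ‖g y‖)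
    hnhds ?_ (integrable_ballPoissonKernel_mul n hg hx)
    ((innerSL ℝ).integrable_comp hgrad).aestronglyMeasurable (.of_forall fun y z hz => ?_)
    (hg.norm.const_mul C) (.of_forall fun y z hz => ?_)).congr_fderiv
    ((innerSL ℝ).integral_comp_comm hgrad)
  · filter_upwards [hnhds] with z hz
    exact (integrable_ballPoissonKernel_mul n hg (hlt hz)).aestronglyMeasurable
  · rw [innerSL_apply_norm, norm_smul, mul_comm]
    gcongr
    exact hC z (mem_ball_zero_iff.1 hz).le y
  · rw [map_smul]
    exact (hasFDerivAt_ballPoissonKernel n (ne_of_mem_unitSphere (hlt hz) y)).mul_const (g y)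

theorem gradient_poissonBall {n : ℕ} {g : sphere (0 : Eu n) 1 → ℝ}
    (hg : Integrable g volume.toSphere) {x : Eu n} (hx : ‖x‖ < 1) :
    gradient (poissonBall g) x =
      (1 / sphereArea n) • ∫ y : sphere (0 : Eu n) 1,
        g y • ballPoissonKernelGrad n x y ∂volume.toSphere := by
  refine HasGradientAt.gradient ?_
  rw [hasGradientAt_iff_hasFDerivAt, map_smul]
  exact (hasGradientAt_integral_ballPoissonKernel n hg hx).hasFDerivAt.const_mul _

end PoissonKernel

section Duality

variable {α E : Type*} [MeasurableSpace α] {μ : Measure α} [NormedAddCommGroup E]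
  [InnerProductSpace ℝ E] {V : α → E} {c : ℝ}

theorem continuous_integral_abs_inner (hV : Integrable V μ) :
    Continuous fun l => ∫ y, |⟪V y, l⟫| ∂μ := by
  refine continuous_iff_continuousAt.2 fun l₀ => continuousAt_of_dominated
    (bound := fun y => ‖V y‖ * (‖l₀‖ + 1))
    (.of_forall fun l => (hV.inner_const l).abs.aestronglyMeasurable) ?_ (hV.norm.mul_const _)
    (.of_forall fun y => by fun_prop)
  filter_upwards [ball_mem_nhds l₀ one_pos] with l hl
  refine .of_forall fun y => ?_
  rw [norm_eq_abs, abs_abs]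
  refine (abs_real_inner_le_norm _ _).trans ?_
  gcongr
  linarith [norm_sub_norm_le l l₀, mem_ball_iff_norm.1 hl]

theorem integral_abs_inner_smul (a : ℝ) (l : E) :
    ∫ y, |⟪V y, a • l⟫| ∂μ = |a| * ∫ y, |⟪V y, l⟫| ∂μ := by
  simp only [real_inner_smul_right, abs_mul, integral_const_mul]

theorem inner_integral_smul [CompleteSpace E] {g : α → ℝ} (hgV : Integrable (fun y => g y • V y) μ)
    (l : E) : ⟪∫ y, g y • V y ∂μ, l⟫ = ∫ y, g y * ⟪V y, l⟫ ∂μ := by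
  rw [real_inner_comm, ← integral_inner hgV]
  simp only [real_inner_smul_right, real_inner_comm l]

theorem integral_abs_inner_le [CompleteSpace E] (hV : Integrable V μ)
    (hc : ∀ g : α → ℝ, Measurable g → (∀ᵐ y ∂μ, |g y| ≤ 1) → ‖∫ y, g y • V y ∂μ‖ ≤ c) (l : E) :
    ∫ y, |⟪V y, l⟫| ∂μ ≤ c * ‖l‖ := by
  set W := hV.aestronglyMeasurable.mk V
  have hW : Measurable fun y => ⟪W y, l⟫ :=
    (hV.aestronglyMeasurable.stronglyMeasurable_mk.inner stronglyMeasurable_const).measurable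
  set g : α → ℝ := fun y => if 0 ≤ ⟪W y, l⟫ then 1 else -1
  have hg : Measurable g :=
    measurable_const.ite (measurableSet_le measurable_const hW) measurable_const
  have hg₁ (y : α) : |g y| ≤ 1 := by
    simp only [g]
    split_ifs <;> simp
  have hgV : Integrable (fun y => g y • V y) μ :=
    hV.bdd_smul 1 hg.aestronglyMeasurable (.of_forall hg₁)
  calc ∫ y, |⟪V y, l⟫| ∂μ = ∫ y, g y * ⟪V y, l⟫ ∂μ := by
        refine integral_congr_ae (hV.aestronglyMeasurable.ae_eq_mk.mono fun y hy => ?_)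
        simp only [g, W, ← hy]
        split_ifs with h
        · rw [abs_of_nonneg h, one_mul]
        · rw [abs_of_neg (not_le.1 h), neg_one_mul]
    _ = ⟪∫ y, g y • V y ∂μ, l⟫ := (inner_integral_smul hgV l).symm
    _ ≤ ‖∫ y, g y • V y ∂μ‖ * ‖l‖ := real_inner_le_norm _ _
    _ ≤ c * ‖l‖ := by
        gcongr
        exact hc g hg (.of_forall hg₁)

theorem norm_integral_smul_le [CompleteSpace E] [Nontrivial E] (hV : Integrable V μ)
    (hc : ∀ l, ∫ y, |⟪V y, l⟫| ∂μ ≤ c * ‖l‖) {g : α → ℝ} (hg : AEStronglyMeasurable g μ)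
    (hg₁ : ∀ᵐ y ∂μ, |g y| ≤ 1) : ‖∫ y, g y • V y ∂μ‖ ≤ c := by
  have hgV : Integrable (fun y => g y • V y) μ := hV.bdd_smul 1 hg hg₁
  set w := ∫ y, g y • V y ∂μ
  obtain hw | hw := (norm_nonneg w).eq_or_lt
  · obtain ⟨l, hl⟩ := exists_norm_eq E zero_le_one
    rw [← hw, ← mul_one c, ← hl]
    exact (integral_nonneg fun y => abs_nonneg _).trans (hc l)
  refine le_of_mul_le_mul_right ?_ hw
  calc ‖w‖ * ‖w‖ = ∫ y, g y * ⟪V y, w⟫ ∂μ := by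
        rw [← real_inner_self_eq_norm_mul_norm]
        exact inner_integral_smul hgV w
    _ ≤ ∫ y, |⟪V y, w⟫| ∂μ := by
        refine integral_mono_ae ?_ (hV.inner_const w).abs (hg₁.mono fun y hy => ?_)
        · simpa only [real_inner_smul_left] using hgV.inner_const (𝕜 := ℝ) w
        · refine (le_abs_self _).trans ?_
          rw [abs_mul]
          exact mul_le_of_le_one_left (abs_nonneg _) hy
    _ ≤ c * ‖w‖ := hc w

theorem forall_norm_integral_smul_le_iff [CompleteSpace E] [Nontrivial E] (hV : Integrable V μ) :
    (∀ g : α → ℝ, Measurable g → (∀ᵐ y ∂μ, |g y| ≤ 1) → ‖∫ y, g y • V y ∂μ‖ ≤ c) ↔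
      ∀ l, ∫ y, |⟪V y, l⟫| ∂μ ≤ c * ‖l‖ :=
  ⟨integral_abs_inner_le hV, fun hc _ hg hg₁ =>
    norm_integral_smul_le hV hc hg.aestronglyMeasurable hg₁⟩

end Duality

section Directions

theorem exists_norm_eq_one_and_eq_norm_smul {E : Type*} [NormedAddCommGroup E] [NormedSpace ℝ E]
    [Nontrivial E] (x : E) : ∃ e : E, ‖e‖ = 1 ∧ x = ‖x‖ • e := by
  obtain rfl | hx := eq_or_ne x 0
  · obtain ⟨e, he⟩ := exists_norm_eq E zero_le_one
    exact ⟨e, he, by simp⟩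
  · exact ⟨‖x‖⁻¹ • x, norm_smul_inv_norm hx, (smul_inv_smul₀ (norm_ne_zero_iff.2 hx) x).symm⟩

variable {E : Type*} [NormedAddCommGroup E] [InnerProductSpace ℝ E] {e : E}

theorem norm_add_smul_of_inner_eq_zero {v : E} (he : ‖e‖ = 1) (hv : ‖v‖ = 1) (hev : ⟪e, v⟫ = 0)
    (γ : ℝ) : ‖e + γ • v‖ = √(1 + γ ^ 2) := by
  rw [← sqrt_sq (norm_nonneg (e + γ • v)), norm_add_sq_real, norm_smul, he, hv,
    real_inner_smul_right, hev, mul_one, norm_eq_abs, sq_abs]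
  ring_nf

theorem dense_setOf_inner_ne_zero (he : e ≠ 0) : Dense {l : E | ⟪e, l⟫ ≠ 0} := by
  have hker : {l : E | ⟪e, l⟫ ≠ 0} = ((ℝ ∙ e)ᗮ : Set E)ᶜ := by
    ext l
    simp [Submodule.mem_orthogonal_singleton_iff_inner_right]
  rw [hker, ← interior_eq_empty_iff_dense_compl]
  by_contra hne
  have htop := (ℝ ∙ e)ᗮ.eq_top_of_nonempty_interior' (nonempty_iff_ne_empty.2 hne)
  have hmem : e ∈ (ℝ ∙ e)ᗮ := htop ▸ Submodule.mem_top
  exact he (inner_self_eq_zero.1 (Submodule.mem_orthogonal_singleton_iff_inner_right.1 hmem))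

theorem exists_eq_smul_add_smul [FiniteDimensional ℝ E] (he : ‖e‖ = 1) (hE : 2 ≤ finrank ℝ E)
    (l : E) : ∃ v : E, ‖v‖ = 1 ∧ ⟪e, v⟫ = 0 ∧ ∃ b ≥ (0 : ℝ), l = ⟪e, l⟫ • e + b • v := by
  have hfin := finrank_orthogonal_singleton (norm_ne_zero_iff.1 (he ▸ one_ne_zero))
  have : Nontrivial (ℝ ∙ e)ᗮ := nontrivial_of_finrank_pos (R := ℝ) (by omega)
  have hw : l - ⟪e, l⟫ • e ∈ (ℝ ∙ e)ᗮ := by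
    rw [Submodule.mem_orthogonal_singleton_iff_inner_right, inner_sub_right, real_inner_smul_right,
      real_inner_self_eq_norm_sq, he]
    ring
  obtain ⟨v, hv, hwv⟩ := exists_norm_eq_one_and_eq_norm_smul (⟨_, hw⟩ : (ℝ ∙ e)ᗮ)
  exact ⟨v, hv, Submodule.mem_orthogonal_singleton_iff_inner_right.1 v.2, ‖l - ⟪e, l⟫ • e‖,
    norm_nonneg _, (add_eq_of_eq_sub' (Subtype.ext_iff.1 hwv).symm).symm⟩

theorem forall_le_mul_norm_iff [FiniteDimensional ℝ E] (he : ‖e‖ = 1) (hE : 2 ≤ finrank ℝ E)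
    {p : E → ℝ} (hp : Continuous p) (hsmul : ∀ (a : ℝ) l, p (a • l) = |a| * p l) {c : ℝ} :
    (∀ l, p l ≤ c * ‖l‖) ↔ ∀ v : E, ‖v‖ = 1 → ⟪e, v⟫ = 0 → ∀ γ ≥ (0 : ℝ),
      p (e + γ • v) ≤ c * √(1 + γ ^ 2) := by
  refine ⟨fun h v hv hev γ _ => norm_add_smul_of_inner_eq_zero he hv hev γ ▸ h _, fun h => ?_⟩
  have hclosed : IsClosed {l | p l ≤ c * ‖l‖} := isClosed_le hp (by fun_prop)
  have hdense := dense_setOf_inner_ne_zero (norm_ne_zero_iff.1 (he ▸ one_ne_zero))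
  refine fun l => closure_minimal (fun l (hl : ⟪e, l⟫ ≠ 0) => ?_) hclosed (hdense l)
  set a := ⟪e, l⟫
  obtain ⟨v, hv, hev, γ, hγ, hl'⟩ := exists_eq_smul_add_smul he hE (a⁻¹ • l)
  rw [real_inner_smul_right, inv_mul_cancel₀ hl, one_smul] at hl'
  calc p l = |a| * p (e + γ • v) := by rw [← hsmul, ← hl', smul_inv_smul₀ hl]
    _ ≤ |a| * (c * ‖e + γ • v‖) := by
        rw [norm_add_smul_of_inner_eq_zero he hv hev]
        gcongr
        exact h v hv hev γ hγ
    _ = c * ‖a • (e + γ • v)‖ := by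
        rw [norm_smul, norm_eq_abs]
        ring
    _ = c * ‖l‖ := by rw [← hl', smul_inv_smul₀ hl]

end Directions

section SharpCoefficient

theorem biSup_le_iff_of_nonneg {ι : Type*} {s : Set ι} (hs : s.Nonempty) {f : ι → ℝ}
    (hf : ∀ i ∈ s, 0 ≤ f i) (hbdd : BddAbove (f '' s)) {c : ℝ} :
    ⨆ i ∈ s, f i ≤ c ↔ ∀ i ∈ s, f i ≤ c := by
  constructor
  · obtain ⟨M, hM⟩ := hbdd
    intro h i hi
    have hM' : BddAbove (range fun i => ⨆ _ : i ∈ s, f i) := by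
      refine ⟨max M 0, forall_mem_range.2 fun j => Real.iSup_le (fun hj => ?_) (le_max_right _ _)⟩
      exact (hM (mem_image_of_mem f hj)).trans (le_max_left _ _)
    refine le_trans ?_ ((le_ciSup hM' i).trans h)
    simp [hi]
  · intro h
    obtain ⟨i, hi⟩ := hs
    have hc : 0 ≤ c := (hf i hi).trans (h i hi)
    exact Real.iSup_le (fun j => Real.iSup_le (h j) hc) hc

variable {n : ℕ} {r : ℝ}

theorem angularIntegral_le (hn : 2 ≤ n) (r γ : ℝ) :
    angularIntegral n r γ ≤ (n + n * |γ| + n * |r|) * (π / 2) * π := by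
  have hinner (φ : ℝ) : ‖∫ θ in (0 : ℝ)..(π / 2), Gfun n θ φ r γ‖ ≤
      (n + n * |γ| + n * |r|) * (π / 2) := by
    simpa [abs_of_pos pi_div_two_pos] using intervalIntegral.norm_integral_le_of_norm_le_const
      (f := (Gfun n · φ r γ)) (a := 0) (b := π / 2) fun θ _ => abs_Gfun_le hn θ φ r γ
  have houter := intervalIntegral.norm_integral_le_of_norm_le_const (a := 0) (b := π)
    (f := fun φ => sin φ ^ (n - 3) * ∫ θ in (0 : ℝ)..(π / 2), Gfun n θ φ r γ)
    (C := (n + n * |γ| + n * |r|) * (π / 2)) fun φ _ => by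
      rw [norm_mul, norm_pow]
      exact (mul_le_of_le_one_left (norm_nonneg _)
        (pow_le_one₀ (norm_nonneg _) (abs_sin_le_one φ))).trans (hinner φ)
  rw [sub_zero, abs_of_pos pi_pos] at houter
  exact (le_abs_self _).trans houter

theorem Kcoef_le_iff (hn : 3 ≤ n) (hr : |r| < 1) {c : ℝ} :
    Kcoef n r ≤ c ↔ ∀ γ ≥ (0 : ℝ), 2 ^ (n - 2) * ((n : ℝ) - 2) /
      (π * (1 + r) ^ (n - 1) * (1 - r)) * angularIntegral n r γ ≤ c * √(1 + γ ^ 2) := by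
  have h₁ : 0 < 1 + r := by linarith [(abs_lt.1 hr).1]
  have h₂ : 0 < 1 - r := by linarith [(abs_lt.1 hr).2]
  have hn' : 0 < (n : ℝ) - 2 := sub_pos.2 (mod_cast hn)
  have hsqrt (γ : ℝ) : 0 < √(1 + γ ^ 2) := by positivity
  have hbdd : BddAbove ((fun γ => 1 / √(1 + γ ^ 2) * angularIntegral n r γ) '' Ici 0) := by
    refine ⟨(n + n + n * |r|) * (π / 2) * π, forall_mem_image.2 fun γ _ => ?_⟩
    have hone : 1 ≤ √(1 + γ ^ 2) := one_le_sqrt.2 (by linarith [sq_nonneg γ])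
    have habs : |γ| ≤ √(1 + γ ^ 2) := abs_le_sqrt (by linarith)
    rw [one_div_mul_eq_div, div_le_iff₀ (hsqrt γ)]
    refine (angularIntegral_le (by omega) r γ).trans ?_
    calc (n + n * |γ| + n * |r|) * (π / 2) * π
        ≤ (n * √(1 + γ ^ 2) + n * √(1 + γ ^ 2) + (n * |r|) * √(1 + γ ^ 2)) * (π / 2) * π := by
          gcongr ?_ * _ * _
          refine add_le_add_three ?_ (by gcongr) ?_ <;>
            exact le_mul_of_one_le_right (by positivity) hone
      _ = _ := by ring
  have hK : 0 < 2 ^ (n - 2) * ((n : ℝ) - 2) / (π * (1 + r) ^ (n - 1) * (1 - r)) := by positivity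
  rw [Kcoef, ← le_div_iff₀' hK]
  refine (biSup_le_iff_of_nonneg nonempty_Ici
    (fun γ _ => mul_nonneg (by positivity) (angularIntegral_nonneg n r γ)) hbdd).trans ?_
  refine forall₂_congr fun γ _ => ?_
  rw [one_div_mul_eq_div, div_le_iff₀ (hsqrt γ), div_mul_eq_mul_div, le_div_iff₀' hK]

theorem one_div_sphereArea_mul_integral_abs_inner_ballPoissonKernelGrad {e v : Eu n} (he : ‖e‖ = 1)
    (hv : ‖v‖ = 1) (hev : ⟪e, v⟫ = 0) (hn : 3 ≤ n) (hr : |r| < 1) (γ : ℝ) :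
    1 / sphereArea n * ∫ y : sphere (0 : Eu n) 1,
        |⟪ballPoissonKernelGrad n (r • e) y, e + γ • v⟫| ∂volume.toSphere =
      2 ^ (n - 2) * ((n : ℝ) - 2) / (π * (1 + r) ^ (n - 1) * (1 - r)) * angularIntegral n r γ := by
  have hfin : finrank ℝ (Eu n) = n := finrank_euclideanSpace_fin
  simp only [inner_ballPoissonKernelGrad n r γ he hev (norm_eq_of_mem_sphere _)]
  simpa only [hfin] using
    one_div_sphereArea_mul_integral_abs_axialKernel he hv hev (hn.trans_eq hfin.symm) hr γ

theorem norm_gradient_poissonBall_le_iff (hn : 0 < n) {x : Eu n} (hx : ‖x‖ < 1) {c : ℝ}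
    {g : sphere (0 : Eu n) 1 → ℝ} (hg : Measurable g) (hg₁ : ∀ᵐ y ∂volume.toSphere, |g y| ≤ 1) :
    ‖gradient (poissonBall g) x‖ ≤ c ↔ ‖∫ y : sphere (0 : Eu n) 1,
        g y • ballPoissonKernelGrad n x y ∂volume.toSphere‖ ≤ sphereArea n * c := by
  have hω := sphereArea_pos hn
  rw [gradient_poissonBall (.of_bound hg.aestronglyMeasurable 1 hg₁) hx, norm_smul, norm_eq_abs,
    abs_of_pos (by positivity), one_div_mul_eq_div, div_le_iff₀' hω]

theorem forall_norm_gradient_poissonBall_le_iff (hn : 2 ≤ n) {x e : Eu n} (he : ‖e‖ = 1)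
    (hx : ‖x‖ < 1) {c : ℝ} :
    (∀ g : sphere (0 : Eu n) 1 → ℝ, Measurable g → (∀ᵐ y ∂volume.toSphere, |g y| ≤ 1) →
        ‖gradient (poissonBall g) x‖ ≤ c) ↔
      ∀ v : Eu n, ‖v‖ = 1 → ⟪e, v⟫ = 0 → ∀ γ ≥ (0 : ℝ), 1 / sphereArea n *
        ∫ y : sphere (0 : Eu n) 1, |⟪ballPoissonKernelGrad n x y, e + γ • v⟫| ∂volume.toSphere ≤
          c * √(1 + γ ^ 2) := by
  have hn₀ : 0 < n := by omega
  have hω := sphereArea_pos hn₀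
  have : Nontrivial (Eu n) := nontrivial_of_finrank_pos (R := ℝ) <| by
    rw [finrank_euclideanSpace_fin]
    omega
  have hV : Integrable (fun y : sphere (0 : Eu n) 1 => ballPoissonKernelGrad n x y)
      volume.toSphere := by
    simpa using integrable_smul_ballPoissonKernelGrad n (integrable_const (1 : ℝ)) hx
  refine Iff.trans (forall₃_congr fun g hg hg₁ =>
    norm_gradient_poissonBall_le_iff hn₀ hx hg hg₁) ?_
  rw [forall_norm_integral_smul_le_iff hV, forall_le_mul_norm_iff he (by simpa using hn)
      (continuous_integral_abs_inner hV) integral_abs_inner_smul]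
  simp only [one_div_mul_eq_div, div_le_iff₀' hω, mul_assoc]

theorem forall_integral_abs_inner_ballPoissonKernelGrad_le_iff (hn : 3 ≤ n) {e : Eu n}
    (he : ‖e‖ = 1) (hr : |r| < 1) {c : ℝ} :
    (∀ v : Eu n, ‖v‖ = 1 → ⟪e, v⟫ = 0 → ∀ γ ≥ (0 : ℝ), 1 / sphereArea n *
        ∫ y : sphere (0 : Eu n) 1,
          |⟪ballPoissonKernelGrad n (r • e) y, e + γ • v⟫| ∂volume.toSphere ≤ c * √(1 + γ ^ 2)) ↔
      Kcoef n r ≤ c := by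
  have heval {v : Eu n} (hv : ‖v‖ = 1) (hev : ⟪e, v⟫ = 0) :=
    one_div_sphereArea_mul_integral_abs_inner_ballPoissonKernelGrad he hv hev hn hr
  rw [Kcoef_le_iff hn hr]
  constructor
  · intro h γ hγ
    obtain ⟨v, hv, hev, -⟩ := exists_eq_smul_add_smul he (by simpa using (by omega : 2 ≤ n)) e
    exact heval hv hev γ ▸ h v hv hev γ hγ
  · intro h v hv hev γ hγ
    exact heval hv hev γ ▸ h γ hγ

end SharpCoefficient

/-- For `n ≥ 3` and `x` in the open unit ball `𝔹 ⊂ ℝⁿ`, the smallest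
constant `c` such that `|∇u(x)| ≤ c ‖g‖_{L^∞(S^{n-1})}` for every Poisson integral `u`
of `g ∈ L^∞(S^{n-1})` (equivalently, such that `|∇u(x)| ≤ c` whenever `‖g‖_∞ ≤ 1`)
equals `𝒦_n(x)` as given by the double-integral formula. -/
theorem sharp_gradient_coefficient_ball
    (n : ℕ) (hn : 3 ≤ n) (x : Eu n) (hx : x ∈ Metric.ball (0 : Eu n) 1) :
    IsLeast {c : ℝ |
        ∀ g : Metric.sphere (0 : Eu n) 1 → ℝ, Measurable g →
          (∀ᵐ y ∂((volume : Measure (Eu n)).toSphere), |g y| ≤ 1) →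
          ‖gradient (poissonBall g) x‖ ≤ c}
      (Kcoef n ‖x‖) := by
  have : Nontrivial (Eu n) := nontrivial_of_finrank_pos (R := ℝ) <| by
    rw [finrank_euclideanSpace_fin]
    omega
  obtain ⟨e, he, hxe⟩ := exists_norm_eq_one_and_eq_norm_smul x
  have hr : |‖x‖| < 1 := by rwa [abs_norm, ← mem_ball_zero_iff]
  generalize ‖x‖ = r at hxe hr ⊢
  subst hxe
  have hsharp (c : ℝ) := (forall_norm_gradient_poissonBall_le_iff (c := c) (by omega) he
    (mem_ball_zero_iff.1 hx)).trans
      (forall_integral_abs_inner_ballPoissonKernelGrad_le_iff hn he hr)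
  exact ⟨(hsharp _).2 le_rfl, fun c => (hsharp c).1⟩
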